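/- arXiv:1110.4523 — 3 statements merged into one kernel-verified Lean document; each statement's English description precedes it below -/
import Mathlib

section
/- Let G = (V ∪ {s}, E) be a finite sandpile graph, W ⊆ V, ξ generalized minimal on W, and η ∈ R_G with η_W = ξ. Let V_1, …, V_K be the connected components of the induced subgraph of G on (V ∪ {s}) \ W that do not contain s, and W' = W ∪ V_1 ∪ ⋯ ∪ V_K. Let B ⊆ V be a burnt set with V \ W' ⊆ B ⊆ V \ (V_1 ∪ ⋯ ∪ V_K) such that no vertex of B ∩ W is adjacent to any V_j, and suppose y ∈ W \ B is burnable for η given {s} ∪ B and y is adjacent to V_j. Then there is a burning sequence for η from the burnt set {s} ∪ B ∪ {y} that burns every vertex of V_j and no other vertex; in particular all of V_j can be burnt after y without burning any further vertex of W. -/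
open scoped Classical

namespace Sandpile

/-- A finite sandpile multigraph on vertex set `α` (which plays the role of `V ∪ {s}`),
given by a distinguished sink and symmetric edge multiplicities. -/
structure Graph (α : Type*) where
  sink : α
  b : α → α → ℕ

namespace Graph

variable {α : Type*} [Fintype α] [DecidableEq α] (G : Graph α)

/-- The non-sink vertices (the set `V`). -/
def VSet : Finset α := Finset.univ.erase G.sink

/-- Degree restricted to a finite set of vertices: `deg_F(x) = ∑_{y ∈ F} b_{xy}`. -/
def degIn (F : Finset α) (x : α) : ℕ := ∑ y ∈ F, G.b x y

/-- Total degree `deg_G(x)`. -/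
def deg (x : α) : ℕ := ∑ y, G.b x y

/-- `G` is a genuine finite sandpile graph: symmetric multiplicities, no loops, connected. -/
def IsSandpileGraph : Prop :=
  (∀ x y, G.b x y = G.b y x) ∧ (∀ x, G.b x x = 0) ∧
    ∀ x y : α, Relation.ReflTransGen (fun u v => 0 < G.b u v) x y

/-- Connectivity of the subgraph induced on the vertex set `S`. -/
def ConnectedOn (S : Set α) : Prop :=
  ∀ x ∈ S, ∀ y ∈ S,
    Relation.ReflTransGen (fun u v => u ∈ S ∧ v ∈ S ∧ 0 < G.b u v) x y

/-- A sandpile is stable if every non-sink vertex carries fewer particles than its degree. -/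
def Stable (η : α → ℕ) : Prop := ∀ x ∈ G.VSet, η x < G.deg x

/-- `η` is ample for `F` if some vertex of `F` has at least `deg_F` particles. -/
def AmpleFor (η : α → ℕ) (F : Finset α) : Prop := ∃ x ∈ F, G.degIn F x ≤ η x

/-- Dhar's burning test: recurrent = stable and ample for every nonempty `F ⊆ V`. -/
def Recurrent (η : α → ℕ) : Prop :=
  G.Stable η ∧ ∀ F ⊆ G.VSet, F.Nonempty → G.AmpleFor η F

/-- Remove one particle at `w` (`η - δ_w`). -/
def SubOne (η : α → ℕ) (w : α) : α → ℕ := fun x => if x = w then η x - 1 else η x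

/-- `η` and `ξ` agree on `W` (restriction `η_W = ξ_W`). -/
def EqOn (η ξ : α → ℕ) (W : Finset α) : Prop := ∀ x ∈ W, η x = ξ x

/-- `ξ` is (generalized) minimal on `W`: it extends to a recurrent sandpile, and no
recurrent extension stays recurrent after removing a particle from a vertex of `W`.
(`η - δ_w ∉ R_G` holds automatically if `η w = 0`, as then `η - δ_w` is not a configuration.) -/
def Minimal (W : Finset α) (ξ : α → ℕ) : Prop :=
  (∃ η, G.Recurrent η ∧ EqOn η ξ W) ∧
    ∀ η, G.Recurrent η → EqOn η ξ W → ∀ w ∈ W, ¬(1 ≤ η w ∧ G.Recurrent (SubOne η w))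

/-- `ν_G[P]`: the uniform probability of the event `P` under the uniform measure on
recurrent configurations (configurations are normalized to vanish at the sink). -/
noncomputable def prob (P : (α → ℕ) → Prop) : ℝ :=
  (Nat.card {η : α → ℕ // η G.sink = 0 ∧ G.Recurrent η ∧ P η} : ℝ) /
    (Nat.card {η : α → ℕ // η G.sink = 0 ∧ G.Recurrent η} : ℝ)

/-- The graph Laplacian with the sink row and column deleted. -/
noncomputable def lapRed :
    Matrix {x : α // x ≠ G.sink} {x : α // x ≠ G.sink} ℝ :=
  Matrix.of fun x y =>
    if (x : α) = (y : α) then (G.deg ↑x : ℝ) else -(G.b ↑x ↑y : ℝ)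

/-- `H = (Δ')⁻¹`, extended by `0` on the sink. -/
noncomputable def Hfun (x y : α) : ℝ :=
  if hx : x = G.sink then 0
  else if hy : y = G.sink then 0
  else (G.lapRed)⁻¹ ⟨x, hx⟩ ⟨y, hy⟩

/-- Oriented edges of the multigraph `G`: an edge from `p.1` to `p.2.1`, with copy
index `p.2.2` (parallel edges are distinct). -/
abbrev OEdge (G : Graph α) : Type _ := {p : α × α × ℕ // p.2.2 < G.b p.1 p.2.1}

/-- `K_G(e,f) = δ_{ef} - Y_G(e,f)` where `Y_G` is the transfer current matrix. -/
noncomputable def Kmat (e f : G.OEdge) : ℝ :=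
  (if e = f then 1 else 0) -
    (G.Hfun e.1.1 f.1.1 - G.Hfun e.1.1 f.1.2.1 - G.Hfun e.1.2.1 f.1.1 +
      G.Hfun e.1.2.1 f.1.2.1)

/-- Unburnt sets of phase one of the burning algorithm based on `Q`:
`U_0 = V`, `U_i = U_{i-1} \ B_i` with `B_i = {x ∈ U_{i-1} \ Q : η x ≥ deg_{U_{i-1}} x}`. -/
def U1 (η : α → ℕ) (Q : Finset α) : ℕ → Finset α
  | 0 => G.VSet
  | i + 1 => (U1 η Q i).filter fun x => x ∈ Q ∨ η x < G.degIn (U1 η Q i) x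

/-- The final unburnt set `U^{(1)}_I` of phase one (the sequence `U1` is decreasing,
hence stabilizes after at most `|α|` steps). -/
def U1lim (η : α → ℕ) (Q : Finset α) : Finset α := G.U1 η Q (Fintype.card α)

/-- Unburnt sets of phase two of the burning algorithm based on `Q`. -/
def U2 (η : α → ℕ) (Q : Finset α) : ℕ → Finset α
  | 0 => G.U1lim η Q
  | i + 1 => (U2 η Q i).filter fun x => η x < G.degIn (U2 η Q i) x

/-- Recurrence in the wired graph `G_W` (note `deg_{G_W}(x) = deg_G(x)` for `x ∈ W`,
and `deg_F` for `F ⊆ W` is the same in `G_W` and `G`). -/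
def WiredRecurrent (W : Finset α) (ξ : α → ℕ) : Prop :=
  (∀ x ∈ W, ξ x < G.deg x) ∧ ∀ F ⊆ W, F.Nonempty → ∃ x ∈ F, G.degIn F x ≤ ξ x

/-- `ξ` is minimal in the wired graph `G_W`. -/
def WiredMinimal (W : Finset α) (ξ : α → ℕ) : Prop :=
  G.WiredRecurrent W ξ ∧ ∀ w ∈ W, ¬(1 ≤ ξ w ∧ G.WiredRecurrent W (SubOne ξ w))

/-- Entry points `E(ξ,W)` of `ξ ∈ R_{G_W}`: vertices burnable at the first step. -/
def entryPoints (W : Finset α) (ξ : α → ℕ) : Finset α :=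
  W.filter fun w => G.degIn W w ≤ ξ w

/-- `x` is burnable given the burnt set `S`: `η(x) ≥ deg_G(x) − ∑_{y ∈ S} b_{xy}`. -/
def Burnable (η : α → ℕ) (S : Finset α) (x : α) : Prop :=
  G.degIn (Finset.univ \ S) x ≤ η x

/-- A burning sequence starting from the burnt set `S`. -/
def IsBurnSeq (η : α → ℕ) : Finset α → List α → Prop
  | _, [] => True
  | S, x :: l => x ∉ S ∧ G.Burnable η S x ∧ IsBurnSeq η (insert x S) l

/-- `B` is a burnt set for `η`: some burning sequence from `{s}` burns exactly `B`. -/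
def IsBurntSet (η : α → ℕ) (B : Finset α) : Prop :=
  ∃ l : List α, G.IsBurnSeq η {G.sink} l ∧ l.toFinset = B

/-- Reachability within the vertex set `S`. -/
def ReachIn (S : Set α) (x y : α) : Prop :=
  Relation.ReflTransGen (fun u v => u ∈ S ∧ v ∈ S ∧ 0 < G.b u v) x y

/-- `C` is a connected component of the subgraph induced on `(V ∪ {s}) \ W`
that does not contain the sink. -/
def IsHoleComp (W C : Finset α) : Prop :=
  C.Nonempty ∧ G.sink ∉ C ∧
    ∀ x ∈ C, ∀ y : α, y ∈ C ↔ y ∉ W ∧ G.ReachIn {a : α | a ∉ W} x y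

/-- Adjacency induced by a finite set `t` of (undirected, indexed) edges. -/
def edgeRel (t : Finset (Sym2 α × ℕ)) (u v : α) : Prop := ∃ k : ℕ, (s(u, v), k) ∈ t

/-- `t` is a spanning tree of the multigraph `G`: it consists of edges of `G`
(parallel edges distinct), it spans (connected), and every edge is a bridge
(equivalently, it is acyclic). -/
def IsSpanningTree (t : Finset (Sym2 α × ℕ)) : Prop :=
  (∀ p ∈ t, ∃ x y : α, p.1 = s(x, y) ∧ p.2 < G.b x y) ∧
  (∀ u v : α, Relation.ReflTransGen (edgeRel t) u v) ∧
  ∀ p ∈ t, ∀ x y : α, p.1 = s(x, y) →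
    ¬ Relation.ReflTransGen (edgeRel (t.erase p)) x y

/-- Adjacency induced by a set of (undirected, indexed) edges. -/
def edgeRelSet (t : Set (Sym2 α × ℕ)) (u v : α) : Prop := ∃ k : ℕ, (s(u, v), k) ∈ t

/-- Set version of `IsSpanningTree`. -/
def IsSpanningTreeSet (t : Set (Sym2 α × ℕ)) : Prop :=
  (∀ p ∈ t, ∃ x y : α, p.1 = s(x, y) ∧ p.2 < G.b x y) ∧
  (∀ u v : α, Relation.ReflTransGen (edgeRelSet t) u v) ∧
  ∀ p ∈ t, ∀ x y : α, p.1 = s(x, y) →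
    ¬ Relation.ReflTransGen (edgeRelSet (t \ {p})) x y

/-- The step at which `x` burns in phase one (0 for the sink; `sInf ∅ = 0` if `x`
never burns in phase one). -/
noncomputable def p1time (η : α → ℕ) (Q : Finset α) (x : α) : ℕ :=
  sInf {i : ℕ | x ∉ G.U1 η Q i}

/-- The step at which `x` burns in phase two. -/
noncomputable def p2time (η : α → ℕ) (Q : Finset α) (x : α) : ℕ :=
  sInf {i : ℕ | x ∉ G.U2 η Q i}

/-- Vertices burnt at step `i` of phase one (`B^{(1)}_0 = {s}`). -/
def B1 (η : α → ℕ) (Q : Finset α) : ℕ → Finset α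
  | 0 => {G.sink}
  | i + 1 => G.U1 η Q i \ G.U1 η Q (i + 1)

/-- Vertices burnt at step `i` of phase two (`B^{(2)}_0` = everything burnt in phase
one, including the sink). -/
def B2 (η : α → ℕ) (Q : Finset α) : ℕ → Finset α
  | 0 => Finset.univ \ G.U1lim η Q
  | i + 1 => G.U2 η Q i \ G.U2 η Q (i + 1)

/-- The set `B^{(p)}_{i-1}` of vertices burnt at the step preceding the step at which
`x` burns (in the appropriate phase). -/
noncomputable def prevBurnt (η : α → ℕ) (Q : Finset α) (x : α) : Finset α :=
  if x ∈ G.U1lim η Q then G.B2 η Q (G.p2time η Q x - 1)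
  else G.B1 η Q (G.p1time η Q x - 1)

/-- The set `D = B^{(p)}_0 ∪ ⋯ ∪ B^{(p)}_{i-1}` of vertices burnt strictly before `x`
in the phase in which `x` burns. -/
noncomputable def burntBefore (η : α → ℕ) (Q : Finset α) (x : α) : Finset α :=
  if x ∈ G.U1lim η Q then Finset.univ \ G.U2 η Q (G.p2time η Q x - 1)
  else Finset.univ \ G.U1 η Q (G.p1time η Q x - 1)

/-- `j = η(x) − deg_G(x) + n_x` with `n_x = ∑_{y ∈ D} b_{xy}`. -/
noncomputable def jX (η : α → ℕ) (Q : Finset α) (x : α) : ℕ :=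
  η x + G.degIn (G.burntBefore η Q x) x - G.deg x

/-- The defining property of the edge `e_x` of the burning bijection based on `Q`:
`e_x` has tail `x`, head burnt at the previous step, and exactly `j` smaller elements
of `P_x` under the given edge order `lt x`. -/
def EdgeSpec (lt : α → G.OEdge → G.OEdge → Prop) (η : α → ℕ) (Q : Finset α)
    (x : α) (e : G.OEdge) : Prop :=
  e.1.1 = x ∧ e.1.2.1 ∈ G.prevBurnt η Q x ∧
    {f : G.OEdge | f.1.1 = x ∧ f.1.2.1 ∈ G.prevBurnt η Q x ∧ lt x f e}.ncard =
      G.jX η Q x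

/-- The (oriented) spanning tree `t(η) = {e_x : x ∈ V}` assigned to `η` by the
burning bijection based on `Q`. -/
def treeOf (lt : α → G.OEdge → G.OEdge → Prop) (η : α → ℕ) (Q : Finset α) :
    Set G.OEdge :=
  {e | ∃ x ∈ G.VSet, G.EdgeSpec lt η Q x e}

/-- Forget the orientation of an oriented edge. -/
def undir (e : G.OEdge) : Sym2 α × ℕ := (s(e.1.1, e.1.2.1), e.1.2.2)

/-- Total burning order: phase-one vertices first (at their phase-one step), then
phase-two vertices. -/
noncomputable def burnOrder (η : α → ℕ) (Q : Finset α) (x : α) : ℕ :=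
  if x ∈ G.U1lim η Q then Fintype.card α + 1 + G.p2time η Q x else G.p1time η Q x

/-- Edge multiplicities of the auxiliary graph `G_W^*` (on vertex set `W ∪ {s}`):
`b*_{xy} = b_{xy}` for `x,y ∈ W`; `b*_{xs} = ∑_{z ∉ W} b_{xz}` for `x ∈ Q` and
`b*_{xs} = 0` for `x ∈ W \ Q`. -/
def bstar (Q W : Finset α) (x y : α) : ℕ :=
  if x ∈ W ∧ y ∈ W then G.b x y
  else if x ∈ W ∧ y = G.sink then
    if x ∈ Q then ∑ z ∈ Finset.univ \ W, G.b x z else 0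
  else if y ∈ W ∧ x = G.sink then
    if y ∈ Q then ∑ z ∈ Finset.univ \ W, G.b z y else 0
  else 0

/-- Recurrence in the auxiliary graph `G_W^*`. -/
def StarRecurrent (Q W : Finset α) (ζ : α → ℕ) : Prop :=
  (∀ x ∈ W, ζ x < ∑ y ∈ insert G.sink W, G.bstar Q W x y) ∧
    ∀ F ⊆ W, F.Nonempty → ∃ x ∈ F, (∑ y ∈ F, G.bstar Q W x y) ≤ ζ x

end Graph

end Sandpile

open Sandpile

/-!
Suppose that part of the hole `C` fails to burn right after `{s} ∪ B`. Since the recurrent `η` burns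
completely, some `w ∈ W` outside the hole then burns before a neighbour `u ∈ C` of it. Raise `η` on
`C` to its maximal stable heights: now all of `C` burns as soon as its neighbour in `B` has burnt,
hence before `w`, and the edges from `w` to `u` let `w` burn even with one particle less. So `w` can
lose a particle without destroying recurrence, and `w ∈ W` contradicts the minimality of `ξ`.
-/

namespace Sandpile.Graph

section Basic

variable {α : Type*} {G : Graph α} {F F' : Finset α} {η η' : α → ℕ} {u w x : α}

theorem degIn_mono (h : F ⊆ F') : G.degIn F x ≤ G.degIn F' x :=
  Finset.sum_le_sum_of_subset h

theorem degIn_lt_degIn (h : F ⊆ F') (huF' : u ∈ F') (huF : u ∉ F) (hxu : 0 < G.b x u) :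
    G.degIn F x < G.degIn F' x :=
  Finset.sum_lt_sum_of_subset h huF' huF hxu fun _ _ _ => Nat.zero_le _

theorem subOne_of_ne [DecidableEq α] (hx : x ≠ w) : SubOne η w x = η x :=
  if_neg hx

theorem subOne_le_subOne [DecidableEq α] (h : η x ≤ η' x) : SubOne η w x ≤ SubOne η' w x := by
  unfold SubOne
  split_ifs <;> omega

end Basic

section Burning

variable {α : Type*} [Fintype α] [DecidableEq α] {G : Graph α} {η : α → ℕ}
  {A B F S T : Finset α} {l l₁ l₂ : List α} {u x y : α}

theorem Burnable.mono (h : G.Burnable η S x) (hST : S ⊆ T) : G.Burnable η T x :=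
  (degIn_mono (Finset.sdiff_subset_sdiff subset_rfl hST)).trans h

theorem Burnable.degIn_le (h : G.Burnable η S x) (hFS : Disjoint F S) : G.degIn F x ≤ η x :=
  (degIn_mono (Finset.subset_sdiff.2 ⟨F.subset_univ, hFS⟩)).trans h

theorem Burnable.degIn_lt (h : G.Burnable η S x) (hFS : Disjoint F S) (huF : u ∉ F) (huS : u ∉ S)
    (hxu : 0 < G.b x u) : G.degIn F x < η x :=
  (degIn_lt_degIn (Finset.subset_sdiff.2 ⟨F.subset_univ, hFS⟩)
    (Finset.mem_sdiff.2 ⟨Finset.mem_univ u, huS⟩) huF hxu).trans_le h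

theorem Burnable.of_union (h : G.Burnable η (S ∪ T) x) (hT : ∀ w ∈ T, G.b x w = 0) :
    G.Burnable η S x := by
  have hsub : Finset.univ \ (S ∪ T) ⊆ Finset.univ \ S :=
    Finset.sdiff_subset_sdiff subset_rfl Finset.subset_union_left
  have hdeg : G.degIn (Finset.univ \ (S ∪ T)) x = G.degIn (Finset.univ \ S) x :=
    Finset.sum_subset hsub fun w hw hw' => hT w (by grind)
  exact hdeg.ge.trans h

theorem isBurnSeq_append :
    G.IsBurnSeq η S (l₁ ++ l₂) ↔
      G.IsBurnSeq η S l₁ ∧ G.IsBurnSeq η (S ∪ l₁.toFinset) l₂ := by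
  induction l₁ generalizing S with
  | nil => simp [IsBurnSeq]
  | cons a l₁ ih =>
    simp only [List.cons_append, IsBurnSeq, ih, List.toFinset_cons, Finset.insert_union,
      Finset.union_insert, and_assoc]

theorem IsBurnSeq.disjoint (hl : G.IsBurnSeq η S l) : Disjoint S l.toFinset := by
  induction l generalizing S with
  | nil => simp
  | cons a l ih =>
    have hS := (Finset.disjoint_insert_left.1 (ih hl.2.2)).2
    rw [List.toFinset_cons, Finset.disjoint_insert_right]
    exact ⟨hl.1, hS⟩

theorem IsBurnSeq.exists_first (hl : G.IsBurnSeq η S l) (hF : ∃ x ∈ F, x ∈ l) :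
    ∃ l₁ : List α, l₁.toFinset ⊆ l.toFinset ∧ G.IsBurnSeq η S l₁ ∧ Disjoint F l₁.toFinset ∧
      ∃ u ∈ F, u ∈ l ∧ G.Burnable η (S ∪ l₁.toFinset) u := by
  obtain ⟨x, hxF, hxl⟩ := hF
  obtain ⟨u, hu⟩ := Option.isSome_iff_exists.1
    (List.find?_isSome (p := fun a => decide (a ∈ F)).2 ⟨x, hxl, decide_eq_true hxF⟩)
  obtain ⟨huF, l₁, l₂, rfl, hl₁⟩ := List.find?_eq_some_iff_append.1 hu
  obtain ⟨hburn₁, -, hburnu, -⟩ := isBurnSeq_append.1 hl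
  have hsub : l₁.toFinset ⊆ (l₁ ++ u :: l₂).toFinset :=
    Multiset.toFinset_subset.2 (List.subset_append_left _ _)
  refine ⟨l₁, hsub, hburn₁, ?_, u, by simpa using huF, by simp, hburnu⟩
  exact Finset.disjoint_right.2 fun a ha => by simpa using hl₁ a (List.mem_toFinset.1 ha)

theorem exists_isBurnSeq_toFinset_eq (hAS : Disjoint A S)
    (hA : ∀ F ⊆ A, F.Nonempty → ∃ x ∈ F, G.Burnable η (S ∪ A \ F) x) :
    ∃ l, G.IsBurnSeq η S l ∧ l.toFinset = A := by
  induction A using Finset.strongInduction generalizing S with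
  | H A ih =>
    obtain rfl | hne := A.eq_empty_or_nonempty
    · exact ⟨[], trivial, rfl⟩
    obtain ⟨x, hxA, hx⟩ := hA A subset_rfl hne
    rw [Finset.sdiff_self, Finset.union_empty] at hx
    have hdisj : Disjoint (A.erase x) (insert x S) := by grind [Finset.disjoint_left]
    obtain ⟨l, hl, hlA⟩ := ih (A.erase x) (Finset.erase_ssubset hxA) hdisj fun F hF hFne => by
      obtain ⟨z, hzF, hz⟩ := hA F (hF.trans (A.erase_subset x)) hFne
      exact ⟨z, hzF, hz.mono (by grind)⟩
    refine ⟨x :: l, ⟨Finset.disjoint_left.1 hAS hxA, hx, hl⟩, ?_⟩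
    rw [List.toFinset_cons, hlA, Finset.insert_erase hxA]

theorem IsBurntSet.insert (hB : G.IsBurntSet η B) (hy : y ∉ insert G.sink B)
    (hburn : G.Burnable η (insert G.sink B) y) : G.IsBurntSet η (insert y B) := by
  obtain ⟨l, hl, rfl⟩ := hB
  rw [Finset.insert_eq] at hy hburn
  exact ⟨l ++ [y], isBurnSeq_append.2 ⟨hl, hy, hburn, trivial⟩, by simp⟩

theorem IsBurntSet.exists_mem_degIn_le (hB : G.IsBurntSet η B) (hs : G.sink ∉ F)
    (hFB : ∃ x ∈ F, x ∈ B) : ∃ x ∈ F, x ∈ B ∧ G.degIn F x ≤ η x := by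
  obtain ⟨l, hl, rfl⟩ := hB
  obtain ⟨l₁, -, -, hFl₁, x, hxF, hxl, hx⟩ := hl.exists_first (by simpa using hFB)
  have hdisj : Disjoint F ({G.sink} ∪ l₁.toFinset) :=
    Finset.disjoint_union_right.2 ⟨Finset.disjoint_singleton_right.2 hs, hFl₁⟩
  exact ⟨x, hxF, List.mem_toFinset.2 hxl, hx.degIn_le hdisj⟩

end Burning

section Recurrence

variable {α : Type*} [Fintype α] [DecidableEq α] {G : Graph α} {η η' : α → ℕ}
  {C F S : Finset α} {w x : α}

theorem mem_VSet : x ∈ G.VSet ↔ x ≠ G.sink := by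
  simp only [VSet, Finset.mem_erase, Finset.mem_univ, and_true]

theorem Recurrent.mono (hη : G.Recurrent η) (hle : ∀ x ∈ G.VSet, η x ≤ η' x)
    (hη' : G.Stable η') : G.Recurrent η' := by
  refine ⟨hη', fun F hF hne => ?_⟩
  obtain ⟨x, hxF, hx⟩ := hη.2 F hF hne
  exact ⟨x, hxF, hx.trans (hle x (hF hxF))⟩

theorem Recurrent.exists_isBurnSeq_compl (hη : G.Recurrent η) (hs : G.sink ∈ S) :
    ∃ l, G.IsBurnSeq η S l ∧ l.toFinset = Sᶜ := by
  refine exists_isBurnSeq_toFinset_eq disjoint_compl_left fun F hF hne => ?_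
  have hunburnt : Finset.univ \ (S ∪ Sᶜ \ F) = F := by grind [Finset.mem_compl]
  have hFV : F ⊆ G.VSet := fun x hx => mem_VSet.2 (by grind [Finset.mem_compl])
  unfold Burnable
  rw [hunburnt]
  exact hη.2 F hFV hne

theorem Recurrent.exists_isBurnSeq_disjoint_burnable (hη : G.Recurrent η) (hs : G.sink ∈ S)
    (hFS : Disjoint F S) (hF : F.Nonempty) :
    ∃ l, G.IsBurnSeq η S l ∧ Disjoint F l.toFinset ∧
      ∃ u ∈ F, G.Burnable η (S ∪ l.toFinset) u := by
  obtain ⟨l, hl, hlS⟩ := hη.exists_isBurnSeq_compl hs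
  obtain ⟨x, hxF⟩ := hF
  have hxl : x ∈ l := by
    rw [← List.mem_toFinset, hlS, Finset.mem_compl]
    exact Finset.disjoint_left.1 hFS hxF
  obtain ⟨l₁, -, hl₁, hFl₁, u, huF, -, hu⟩ := hl.exists_first ⟨x, hxF, hxl⟩
  exact ⟨l₁, hl₁, hFl₁, u, huF, hu⟩

theorem Recurrent.subOne (hη : G.Recurrent η)
    (hw : ∀ F ⊆ G.VSet, w ∈ F → G.AmpleFor (SubOne η w) F) : G.Recurrent (SubOne η w) := by
  refine ⟨fun x hx => lt_of_le_of_lt ?_ (hη.1 x hx), fun F hF hne => ?_⟩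
  · unfold SubOne
    split_ifs <;> omega
  · by_cases hwF : w ∈ F
    · exact hw F hF hwF
    · obtain ⟨x, hxF, hx⟩ := hη.2 F hF hne
      exact ⟨x, hxF, by rwa [subOne_of_ne (ne_of_mem_of_not_mem hxF hwF)]⟩

/-- The sandpile obtained from `η` by raising every vertex of `C` to its maximal stable height
`deg x - 1`; used to make a hole burn as soon as one of its neighbours has burnt. The value is
the truncated `0` at an isolated vertex. -/
def fill (G : Graph α) (η : α → ℕ) (C : Finset α) : α → ℕ :=
  C.piecewise (fun x => G.deg x - 1) η

theorem fill_of_mem (hx : x ∈ C) : G.fill η C x = G.deg x - 1 :=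
  Finset.piecewise_eq_of_mem _ _ _ hx

theorem fill_of_notMem (hx : x ∉ C) : G.fill η C x = η x :=
  Finset.piecewise_eq_of_notMem _ _ _ hx

theorem Stable.le_fill (hη : G.Stable η) (hx : x ∈ G.VSet) : η x ≤ G.fill η C x := by
  by_cases hxC : x ∈ C
  · rw [fill_of_mem hxC]
    exact Nat.le_sub_one_of_lt (hη x hx)
  · rw [fill_of_notMem hxC]

theorem Stable.fill (hη : G.Stable η) : G.Stable (G.fill η C) := by
  intro x hx
  by_cases hxC : x ∈ C
  · rw [fill_of_mem hxC]
    exact Nat.sub_one_lt_of_lt (hη x hx)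
  · rw [fill_of_notMem hxC]
    exact hη x hx

theorem Recurrent.fill (hη : G.Recurrent η) : G.Recurrent (G.fill η C) :=
  hη.mono (fun _ => hη.1.le_fill) hη.1.fill

end Recurrence

section Holes

variable {α : Type*} {G : Graph α} {W C F : Finset α} {x y v : α}

theorem IsHoleComp.disjoint (hC : G.IsHoleComp W C) : Disjoint W C :=
  Finset.disjoint_right.2 fun x hx => ((hC.2.2 x hx x).1 hx).1

theorem IsHoleComp.mem_of_adj (hC : G.IsHoleComp W C) (hx : x ∈ C) (hxv : 0 < G.b x v)
    (hvC : v ∉ C) : v ∈ W := by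
  by_contra hvW
  have hxW := Finset.disjoint_right.1 hC.disjoint hx
  exact hvC ((hC.2.2 x hx v).2 ⟨hvW, .single ⟨hxW, hvW, hxv⟩⟩)

theorem IsHoleComp.exists_adj_notMem (hC : G.IsHoleComp W C)
    (hyC : ∃ z ∈ C, 0 < G.b z y) (hyF : y ∉ F) (hFC : ∃ x ∈ F, x ∈ C) :
    ∃ x ∈ F, x ∈ C ∧ ∃ v ∉ F, 0 < G.b x v := by
  by_contra! hclosed
  obtain ⟨z, hzC, hzy⟩ := hyC
  obtain ⟨x, hxF, hxC⟩ := hFC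
  have hreach : ∀ v, G.ReachIn {a | a ∉ W} x v → v ∈ F := by
    intro v hv
    induction hv with
    | refl => exact hxF
    | tail hxb hbc hbF =>
      by_contra hcF
      have hbC := (hC.2.2 x hxC _).2 ⟨hbc.1, hxb⟩
      exact (hclosed _ hbF hbC _ hcF).not_gt hbc.2.2
  exact (hclosed z (hreach z ((hC.2.2 x hxC z).1 hzC).2) hzC y hyF).not_gt hzy

theorem IsHoleComp.exists_mem_degIn_le_fill [Fintype α] [DecidableEq α] {η : α → ℕ}
    (hC : G.IsHoleComp W C) (hyC : ∃ z ∈ C, 0 < G.b z y) (hyF : y ∉ F)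
    (hFC : ∃ x ∈ F, x ∈ C) : ∃ x ∈ F, x ∈ C ∧ G.degIn F x ≤ G.fill η C x := by
  obtain ⟨x, hxF, hxC, v, hvF, hxv⟩ := hC.exists_adj_notMem hyC hyF hFC
  have hlt : G.degIn F x < G.deg x :=
    degIn_lt_degIn F.subset_univ (Finset.mem_univ v) hvF hxv
  exact ⟨x, hxF, hxC, (Nat.le_sub_one_of_lt hlt).trans_eq (fill_of_mem hxC).symm⟩

end Holes

section Minimality

variable {α : Type*} [Fintype α] [DecidableEq α] {G : Graph α} {W B C F S : Finset α}
  {ξ η : α → ℕ} {l : List α} {y u w : α}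

theorem IsBurnSeq.pos (hl : G.IsBurnSeq η S l) (hwl : w ∈ l) (hu : u ∉ S ∪ l.toFinset)
    (hwu : 0 < G.b w u) : 0 < η w := by
  obtain ⟨l₁, hl₁, -, -, x, hxw, -, hx⟩ :=
    hl.exists_first (F := {w}) ⟨w, Finset.mem_singleton_self w, hwl⟩
  obtain rfl := Finset.mem_singleton.1 hxw
  have hu₁ : u ∉ S ∪ l₁.toFinset := fun h =>
    hu (Finset.union_subset_union_right hl₁ h)
  exact (Nat.zero_le _).trans_lt
    (hx.degIn_lt (Finset.disjoint_empty_left _) (Finset.notMem_empty u) hu₁ hwu)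

theorem IsBurnSeq.exists_mem_degIn_le_subOne (hl : G.IsBurnSeq η S l) (hFS : Disjoint F S)
    (hwF : w ∈ F) (hwl : w ∈ l) (huF : u ∉ F) (hu : u ∉ S ∪ l.toFinset)
    (hwu : 0 < G.b w u) : ∃ x ∈ F, G.degIn F x ≤ SubOne η w x := by
  obtain ⟨l₁, hl₁, -, hFl₁, x, hxF, -, hx⟩ := hl.exists_first ⟨w, hwF, hwl⟩
  have hF : Disjoint F (S ∪ l₁.toFinset) := Finset.disjoint_union_right.2 ⟨hFS, hFl₁⟩
  refine ⟨x, hxF, ?_⟩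
  by_cases hxw : x = w
  · subst hxw
    have hu₁ : u ∉ S ∪ l₁.toFinset := fun h =>
      hu (Finset.union_subset_union_right hl₁ h)
    rw [SubOne, if_pos rfl]
    exact Nat.le_sub_one_of_lt (hx.degIn_lt hF huF hu₁ hwu)
  · rw [subOne_of_ne hxw]
    exact hx.degIn_le hF

theorem Recurrent.subOne_fill (hη : G.Recurrent η) (hB : G.IsBurntSet η B)
    (hC : G.IsHoleComp W C) (hyB : y ∈ B) (hyC : ∃ z ∈ C, 0 < G.b z y) (hBS : B ⊆ S)
    (hSC : S ⊆ insert G.sink (B ∪ C)) (hl : G.IsBurnSeq η S l) (hwl : w ∈ l) (hwC : w ∉ C)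
    (huC : u ∈ C) (hu : u ∉ S ∪ l.toFinset) (hwu : 0 < G.b w u) :
    G.Recurrent (SubOne (G.fill η C) w) := by
  have hwB : w ∉ B := fun h =>
    Finset.disjoint_left.1 hl.disjoint (hBS h) (List.mem_toFinset.2 hwl)
  refine hη.fill.subOne fun F hFV hwF => ?_
  have hs : G.sink ∉ F := fun h => mem_VSet.1 (hFV h) rfl
  by_cases hFB : ∃ x ∈ F, x ∈ B
  · obtain ⟨x, hxF, hxB, hx⟩ := hB.exists_mem_degIn_le hs hFB
    refine ⟨x, hxF, ?_⟩
    rw [subOne_of_ne (ne_of_mem_of_not_mem hxB hwB)]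
    exact hx.trans (hη.1.le_fill (hFV hxF))
  by_cases hFC : ∃ x ∈ F, x ∈ C
  · obtain ⟨x, hxF, hxC, hx⟩ :=
      hC.exists_mem_degIn_le_fill (η := η) hyC (fun h => hFB ⟨y, h, hyB⟩) hFC
    exact ⟨x, hxF, by rwa [subOne_of_ne (ne_of_mem_of_not_mem hxC hwC)]⟩
  have hFS : Disjoint F S := Finset.disjoint_left.2 fun x hxF hxS => by grind
  obtain ⟨x, hxF, hx⟩ :=
    hl.exists_mem_degIn_le_subOne hFS hwF hwl (fun h => hFC ⟨u, h, huC⟩) hu hwu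
  exact ⟨x, hxF, hx.trans (subOne_le_subOne (hη.1.le_fill (hFV hxF)))⟩

theorem Minimal.b_eq_zero_of_mem_isBurnSeq (hsymm : ∀ x y, G.b x y = G.b y x)
    (hmin : G.Minimal W ξ) (hη : G.Recurrent η) (hηW : EqOn η ξ W) (hB : G.IsBurntSet η B)
    (hC : G.IsHoleComp W C) (hyB : y ∈ B) (hyC : ∃ z ∈ C, 0 < G.b z y) (hBS : B ⊆ S)
    (hSC : S ⊆ insert G.sink (B ∪ C)) (hl : G.IsBurnSeq η S l) (hwl : w ∈ l) (hwC : w ∉ C)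
    (huC : u ∈ C) (hu : u ∉ S ∪ l.toFinset) : G.b u w = 0 := by
  by_contra hne
  have huw : 0 < G.b u w := Nat.pos_of_ne_zero hne
  have hwu : 0 < G.b w u := hsymm u w ▸ huw
  have hfillW : EqOn (G.fill η C) ξ W := fun x hx => by
    rw [fill_of_notMem (Finset.disjoint_left.1 hC.disjoint hx), hηW x hx]
  refine hmin.2 _ hη.fill hfillW w (hC.mem_of_adj huC huw hwC) ⟨?_, ?_⟩
  · rw [fill_of_notMem hwC]
    exact hl.pos hwl hu hwu
  · exact hη.subOne_fill hB hC hyB hyC hBS hSC hl hwl hwC huC hu hwu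

end Minimality

end Sandpile.Graph

theorem statement_10_general {α : Type*} [Fintype α] [DecidableEq α] (G : Sandpile.Graph α)
    (hsymm : ∀ x y, G.b x y = G.b y x) (W : Finset α) (ξ : α → ℕ) (hmin : G.Minimal W ξ)
    (η : α → ℕ) (hη : G.Recurrent η) (hηW : Graph.EqOn η ξ W)
    (B : Finset α) (hB : G.IsBurntSet η B) (C : Finset α) (hC : G.IsHoleComp W C)
    (hBC : Disjoint B C) (hadj : ∃ y ∈ B, ∃ z ∈ C, 0 < G.b y z) :
    ∃ l : List α, G.IsBurnSeq η (insert G.sink B) l ∧ l.toFinset = C := by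
  obtain ⟨y, hyB, z, hzC, hyz⟩ := hadj
  have hCS : Disjoint C (insert G.sink B) :=
    Finset.disjoint_insert_right.2 ⟨hC.2.1, hBC.symm⟩
  refine Graph.exists_isBurnSeq_toFinset_eq hCS fun F hFC hF => ?_
  have hFS : Disjoint F (insert G.sink B ∪ C \ F) :=
    Finset.disjoint_union_right.2 ⟨hCS.mono_left hFC, Finset.disjoint_sdiff⟩
  obtain ⟨l, hl, hFl, u, huF, hu⟩ := hη.exists_isBurnSeq_disjoint_burnable (by simp) hFS hF
  refine ⟨u, huF, hu.of_union fun w hw => ?_⟩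
  have hwC : w ∉ C := by
    grind [Finset.disjoint_left, hl.disjoint]
  exact hmin.b_eq_zero_of_mem_isBurnSeq hsymm hη hηW hB hC hyB ⟨z, hzC, hsymm y z ▸ hyz⟩
    (by grind) (by grind) hl (List.mem_toFinset.1 hw) hwC (hFC huF)
    (Finset.disjoint_left.1 (Finset.disjoint_union_right.2 ⟨hFS, hFl⟩) huF)

/-- Lemma `burn_hole`. In the burning of a recurrent extension of a
generalized minimal configuration, once a vertex `y ∈ W` adjacent to a hole component
`C` becomes burnable (with all of `V \ W'` already burnt and no burnt vertex of `W`
adjacent to any hole), burning `y` allows all of `C` (and nothing else) to be burnt. -/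
theorem statement_10 {α : Type*} [Fintype α] [DecidableEq α] (G : Sandpile.Graph α)
    (hG : G.IsSandpileGraph) (W : Finset α) (hWne : W.Nonempty) (hWs : G.sink ∉ W)
    (ξ : α → ℕ) (hstable : ∀ x ∈ W, ξ x < G.deg x) (hmin : G.Minimal W ξ)
    (η : α → ℕ) (hη : G.Recurrent η) (hηW : Graph.EqOn η ξ W)
    (B : Finset α) (hB : G.IsBurntSet η B) (hBV : B ⊆ G.VSet)
    (hB1 : ∀ x ∈ G.VSet, x ∉ W → (∀ C : Finset α, G.IsHoleComp W C → x ∉ C) → x ∈ B)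
    (hB2 : ∀ C : Finset α, G.IsHoleComp W C → ∀ x ∈ B, x ∉ C)
    (hB3 : ∀ C : Finset α, G.IsHoleComp W C → ∀ x ∈ B, x ∈ W → ∀ z ∈ C, G.b x z = 0)
    (y : α) (hyW : y ∈ W) (hyB : y ∉ B)
    (hyburn : G.Burnable η (insert G.sink B) y)
    (C : Finset α) (hC : G.IsHoleComp W C) (hyC : ∃ z ∈ C, 0 < G.b y z) :
    ∃ l : List α, G.IsBurnSeq η (insert y (insert G.sink B)) l ∧ l.toFinset = C := by
  have hyS : y ∉ insert G.sink B := by grind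
  have hyC' : y ∉ C := Finset.disjoint_left.1 hC.disjoint hyW
  have hBC : Disjoint (insert y B) C :=
    Finset.disjoint_insert_left.2 ⟨hyC', Finset.disjoint_left.2 (hB2 C hC)⟩
  rw [Finset.insert_comm]
  exact statement_10_general G hG.1 W ξ hmin η hη hηW (insert y B) (hB.insert hyS hyburn) C hC
    hBC ⟨y, Finset.mem_insert_self y B, hyC⟩
end

section
/- Let G = (V ∪ {s}, E) be a finite sandpile graph, W ⊆ V nonempty with the induced subgraph of G on (V ∪ {s}) \ W connected, and ξ a stable configuration on W (ξ(x) < deg_G(x) for x ∈ W). Define η* by η*(x) = ξ(x) for x ∈ W and η*(x) = deg_G(x) − 1 for x ∈ V \ W. Then the following are equivalent: (a) ξ is minimal on W; (b) η* ∈ R_G and for every w ∈ W, η* − δ_w ∉ R_G; (c) ξ ∈ R_{G_W} and for every w ∈ W, ξ − δ_w ∉ R_{G_W}. -/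
open scoped Classical

open Sandpile

/-!
Recurrence in `G_W` asks for stability and ampleness only on subsets of `W`, so the restriction to
`W` of any recurrent sandpile is recurrent in `G_W`. Conversely, fill `V \ W` up to `deg - 1`. A
nonempty `F ⊆ V` not contained in `W` then contains the tail `u ∉ W` of an edge leaving `F`, because
a path outside `W` leads from `F \ W` to the sink; so `deg_F u ≤ deg u - 1`, and the filled sandpile
is ample for `F`. Thus `η*` is recurrent in `G` exactly when `ξ` is recurrent in `G_W`, and removing
a particle at `w ∈ W` commutes with both restriction to `W` and filling.
-/

namespace Sandpile

theorem exists_rel_mem_notMem_of_reflTransGen {α : Type*} {r : α → α → Prop} {S : Set α} {x y : α}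
    (h : Relation.ReflTransGen r x y) (hx : x ∈ S) (hy : y ∉ S) : ∃ u ∈ S, ∃ v ∉ S, r u v := by
  induction h with
  | refl => exact absurd hx hy
  | @tail u v _ huv ih =>
    by_cases hu : u ∈ S
    · exact ⟨u, hu, v, hy, huv⟩
    · exact ih hu

namespace Graph

variable {α : Type*} {W F : Finset α} {η ξ : α → ℕ}

theorem EqOn.subOne [DecidableEq α] (h : EqOn η ξ W) (w : α) :
    EqOn (SubOne η w) (SubOne ξ w) W := fun x hx => by
  simp only [SubOne, h x hx]

variable [Fintype α] {G : Graph α}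

theorem degIn_lt_deg {u v : α} (hv : v ∉ F) (huv : 0 < G.b u v) : G.degIn F u < G.deg u :=
  Finset.sum_lt_sum_of_subset (Finset.subset_univ F) (Finset.mem_univ v) hv huv
    fun _ _ _ => Nat.zero_le _

theorem exists_degIn_lt_deg_of_reachIn {S : Set α} {x y : α} (h : G.ReachIn S x y) (hx : x ∈ F)
    (hy : y ∉ F) : ∃ u ∈ F, u ∈ S ∧ G.degIn F u < G.deg u := by
  obtain ⟨u, hu, v, hv, huS, -, huv⟩ :=
    exists_rel_mem_notMem_of_reflTransGen (S := (F : Set α)) h hx hy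
  exact ⟨u, hu, huS, degIn_lt_deg hv huv⟩

theorem deg_pos_of_reachIn {S : Set α} {x y : α} (h : G.ReachIn S x y) (hxy : x ≠ y) :
    0 < G.deg x := by
  obtain ⟨u, hu, -, hlt⟩ := exists_degIn_lt_deg_of_reachIn h (Finset.mem_singleton_self x)
    (Finset.notMem_singleton.2 hxy.symm)
  exact Finset.mem_singleton.1 hu ▸ Nat.zero_lt_of_lt hlt

theorem WiredRecurrent.mono {W' : Finset α} (h : G.WiredRecurrent W η) (hW : W' ⊆ W) :
    G.WiredRecurrent W' η :=
  ⟨fun x hx => h.1 x (hW hx), fun F hF => h.2 F (hF.trans hW)⟩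

theorem WiredRecurrent.congr (h : G.WiredRecurrent W η) (he : EqOn η ξ W) :
    G.WiredRecurrent W ξ := by
  refine ⟨fun x hx => he x hx ▸ h.1 x hx, fun F hF hne => ?_⟩
  obtain ⟨x, hx, hd⟩ := h.2 F hF hne
  exact ⟨x, hx, he x (hF hx) ▸ hd⟩

variable [DecidableEq α]

theorem subset_VSet_iff : W ⊆ G.VSet ↔ G.sink ∉ W := by
  simp only [VSet, Finset.subset_erase, Finset.subset_univ, true_and]

theorem recurrent_iff_wiredRecurrent_VSet : G.Recurrent η ↔ G.WiredRecurrent G.VSet η :=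
  Iff.rfl

theorem Recurrent.wiredRecurrent (h : G.Recurrent η) (hWs : G.sink ∉ W) (he : EqOn η ξ W) :
    G.WiredRecurrent W ξ :=
  ((recurrent_iff_wiredRecurrent_VSet.1 h).mono (subset_VSet_iff.2 hWs)).congr he

variable (G W ξ) in
/-- The maximal extension `η*` of a configuration `ξ` on `W`: the largest stable value off `W`.
At a vertex of degree `0` truncated subtraction makes this `0`, which is not stable. -/
def maxExtension : α → ℕ := fun x => if x ∈ W then ξ x else G.deg x - 1

theorem maxExtension_of_mem {x : α} (hx : x ∈ W) : G.maxExtension W ξ x = ξ x :=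
  if_pos hx

theorem maxExtension_of_notMem {x : α} (hx : x ∉ W) : G.maxExtension W ξ x = G.deg x - 1 :=
  if_neg hx

theorem eqOn_maxExtension : EqOn (G.maxExtension W ξ) ξ W :=
  fun _ => maxExtension_of_mem

theorem subOne_maxExtension {w : α} (hw : w ∈ W) :
    SubOne (G.maxExtension W ξ) w = G.maxExtension W (SubOne ξ w) := by
  funext x
  by_cases hx : x ∈ W
  · simp only [SubOne, maxExtension_of_mem hx]
  · simp only [SubOne, maxExtension_of_notMem hx, if_neg (ne_of_mem_of_not_mem hw hx).symm]

theorem ampleFor_maxExtension (hreach : ∀ x ∉ W, G.ReachIn {x | x ∉ W} x G.sink)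
    (hF : G.sink ∉ F) (hFW : ¬F ⊆ W) : G.AmpleFor (G.maxExtension W ξ) F := by
  obtain ⟨x, hxF, hxW⟩ := Finset.not_subset.1 hFW
  obtain ⟨u, huF, huW, hlt⟩ := exists_degIn_lt_deg_of_reachIn (hreach x hxW) hxF hF
  exact ⟨u, huF, (Nat.le_sub_one_of_lt hlt).trans_eq (maxExtension_of_notMem huW).symm⟩

theorem WiredRecurrent.recurrent_maxExtension
    (hreach : ∀ x ∉ W, G.ReachIn {x | x ∉ W} x G.sink) (h : G.WiredRecurrent W ξ) :
    G.Recurrent (G.maxExtension W ξ) := by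
  have hη : G.WiredRecurrent W (G.maxExtension W ξ) :=
    h.congr fun _ hx => (maxExtension_of_mem hx).symm
  refine ⟨fun x hx => ?_, fun F hF hne => ?_⟩
  · by_cases hxW : x ∈ W
    · exact hη.1 x hxW
    · have hdeg : 0 < G.deg x := deg_pos_of_reachIn (hreach x hxW) (Finset.ne_of_mem_erase hx)
      exact (maxExtension_of_notMem hxW).trans_lt (Nat.sub_one_lt_of_lt hdeg)
  · by_cases hFW : F ⊆ W
    · exact hη.2 F hFW hne
    · exact ampleFor_maxExtension hreach (subset_VSet_iff.1 hF) hFW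

theorem recurrent_maxExtension_iff (hWs : G.sink ∉ W)
    (hreach : ∀ x ∉ W, G.ReachIn {x | x ∉ W} x G.sink) :
    G.Recurrent (G.maxExtension W ξ) ↔ G.WiredRecurrent W ξ :=
  ⟨fun h => h.wiredRecurrent hWs eqOn_maxExtension,
    WiredRecurrent.recurrent_maxExtension hreach⟩

theorem one_le_and_recurrent_subOne_maxExtension_iff (hWs : G.sink ∉ W)
    (hreach : ∀ x ∉ W, G.ReachIn {x | x ∉ W} x G.sink) {w : α} (hw : w ∈ W) :
    1 ≤ G.maxExtension W ξ w ∧ G.Recurrent (SubOne (G.maxExtension W ξ) w) ↔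
      1 ≤ ξ w ∧ G.WiredRecurrent W (SubOne ξ w) := by
  rw [subOne_maxExtension hw, maxExtension_of_mem hw, recurrent_maxExtension_iff hWs hreach]

theorem maxExtension_minimal_iff_wiredMinimal (hWs : G.sink ∉ W)
    (hreach : ∀ x ∉ W, G.ReachIn {x | x ∉ W} x G.sink) :
    (G.Recurrent (G.maxExtension W ξ) ∧ ∀ w ∈ W,
      ¬(1 ≤ G.maxExtension W ξ w ∧ G.Recurrent (SubOne (G.maxExtension W ξ) w))) ↔
      G.WiredMinimal W ξ :=
  and_congr (recurrent_maxExtension_iff hWs hreach) <| forall₂_congr fun _ hw =>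
    not_congr (one_le_and_recurrent_subOne_maxExtension_iff hWs hreach hw)

theorem WiredMinimal.minimal (hWs : G.sink ∉ W)
    (hreach : ∀ x ∉ W, G.ReachIn {x | x ∉ W} x G.sink) (h : G.WiredMinimal W ξ) :
    G.Minimal W ξ := by
  refine ⟨⟨_, h.1.recurrent_maxExtension hreach, eqOn_maxExtension⟩, ?_⟩
  rintro η - he w hw ⟨hpos, hrec⟩
  exact h.2 w hw ⟨he w hw ▸ hpos, hrec.wiredRecurrent hWs (he.subOne w)⟩

theorem Minimal.wiredMinimal (hWs : G.sink ∉ W)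
    (hreach : ∀ x ∉ W, G.ReachIn {x | x ∉ W} x G.sink) (h : G.Minimal W ξ) :
    G.WiredMinimal W ξ := by
  obtain ⟨⟨η, hη, he⟩, hmin⟩ := h
  have hmax : G.Recurrent (G.maxExtension W ξ) :=
    (hη.wiredRecurrent hWs he).recurrent_maxExtension hreach
  exact (maxExtension_minimal_iff_wiredMinimal hWs hreach).1
    ⟨hmax, hmin _ hmax eqOn_maxExtension⟩

theorem minimal_iff_wiredMinimal (hWs : G.sink ∉ W)
    (hreach : ∀ x ∉ W, G.ReachIn {x | x ∉ W} x G.sink) :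
    G.Minimal W ξ ↔ G.WiredMinimal W ξ :=
  ⟨Minimal.wiredMinimal hWs hreach, WiredMinimal.minimal hWs hreach⟩

end Graph

end Sandpile

theorem statement_13_general {α : Type*} [Fintype α] [DecidableEq α] (G : Sandpile.Graph α)
    (W : Finset α) (hWs : G.sink ∉ W) (hreach : ∀ x ∉ W, G.ReachIn {x | x ∉ W} x G.sink)
    (ξ : α → ℕ) :
    (G.Minimal W ξ ↔
      (G.Recurrent (fun x => if x ∈ W then ξ x else G.deg x - 1) ∧
        ∀ w ∈ W,
          ¬(1 ≤ (fun x => if x ∈ W then ξ x else G.deg x - 1 : α → ℕ) w ∧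
            G.Recurrent
              (Graph.SubOne (fun x => if x ∈ W then ξ x else G.deg x - 1) w)))) ∧
    (G.Minimal W ξ ↔ G.WiredMinimal W ξ) :=
  have hwired : G.Minimal W ξ ↔ G.WiredMinimal W ξ := Graph.minimal_iff_wiredMinimal hWs hreach
  ⟨hwired.trans (Graph.maxExtension_minimal_iff_wiredMinimal hWs hreach).symm, hwired⟩

/-- Equivalent characterizations of minimality: via all recurrent
extensions, via the maximal extension `η*`, and via the wired graph `G_W`. -/
theorem statement_13 {α : Type*} [Fintype α] [DecidableEq α] (G : Sandpile.Graph α)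
    (hG : G.IsSandpileGraph) (W : Finset α) (hWne : W.Nonempty) (hWs : G.sink ∉ W)
    (hconn : G.ConnectedOn {x : α | x ∉ W}) (ξ : α → ℕ)
    (hstable : ∀ x ∈ W, ξ x < G.deg x) :
    (G.Minimal W ξ ↔
      (G.Recurrent (fun x => if x ∈ W then ξ x else G.deg x - 1) ∧
        ∀ w ∈ W,
          ¬(1 ≤ (fun x => if x ∈ W then ξ x else G.deg x - 1 : α → ℕ) w ∧
            G.Recurrent
              (Graph.SubOne (fun x => if x ∈ W then ξ x else G.deg x - 1) w)))) ∧
    (G.Minimal W ξ ↔ G.WiredMinimal W ξ) :=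
  statement_13_general G W hWs (fun x hx => hconn x hx G.sink hWs) ξ
end

section
/- Let G = (V ∪ {s}, E) be a finite sandpile graph, Q ⊆ V, and η a stable sandpile on G. Then the two-phase burning based on Q eventually burns every vertex (i.e., U^{(2)}_i = ∅ for all sufficiently large i) if and only if η ∈ R_G, i.e., η is ample for every nonempty F ⊆ V. -/
open scoped Classical

open Sandpile

/-!
A non-ample set can never start to burn: while all of `F` is unburnt, a vertex `x ∈ F` has
`η x < deg_F x ≤ deg_U x` for the current unburnt set `U ⊇ F`. So every non-ample `F ⊆ V` survives
both phases. Conversely, the unburnt sets of phase two decrease, hence stabilize, and the set at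
which they stabilize is non-ample. It is therefore the largest non-ample subset of `V`, and it is
empty if and only if `η` is ample for every nonempty subset.
-/

namespace Sandpile.Graph

section Ample

variable {α : Type*} (G : Graph α) {η : α → ℕ} {F U : Finset α}

theorem degIn_mono_s15 (x : α) : Monotone fun F => G.degIn F x :=
  fun _ _ hFU => Finset.sum_le_sum_of_subset hFU

theorem not_ampleFor_iff : ¬ G.AmpleFor η F ↔ ∀ x ∈ F, η x < G.degIn F x := by
  simp only [AmpleFor, not_exists, not_and, not_le]

theorem lt_degIn_of_not_ampleFor (hF : ¬ G.AmpleFor η F) (hFU : F ⊆ U) {x : α} (hx : x ∈ F) :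
    η x < G.degIn U x :=
  (G.not_ampleFor_iff.mp hF x hx).trans_le (G.degIn_mono_s15 x hFU)

end Ample

section Burning

variable {α : Type*} [Fintype α] [DecidableEq α] (G : Graph α) (η : α → ℕ) (Q : Finset α)

theorem U1_antitone : Antitone (G.U1 η Q) :=
  antitone_nat_of_succ_le fun _ => Finset.filter_subset _ _

theorem U2_antitone : Antitone (G.U2 η Q) :=
  antitone_nat_of_succ_le fun _ => Finset.filter_subset _ _

theorem U2_subset_VSet (i : ℕ) : G.U2 η Q i ⊆ G.VSet :=
  (G.U2_antitone η Q i.zero_le).trans (G.U1_antitone η Q (Fintype.card α).zero_le)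

theorem U2_succ_eq_self_iff {i : ℕ} :
    G.U2 η Q (i + 1) = G.U2 η Q i ↔ ¬ G.AmpleFor η (G.U2 η Q i) :=
  Finset.filter_eq_self.trans G.not_ampleFor_iff.symm

variable {η} {F : Finset α}

theorem subset_U1_of_not_ampleFor (hFV : F ⊆ G.VSet) (hF : ¬ G.AmpleFor η F) (i : ℕ) :
    F ⊆ G.U1 η Q i := by
  induction i with
  | zero => exact hFV
  | succ i ih =>
    exact fun x hx =>
      Finset.mem_filter.mpr ⟨ih hx, Or.inr (G.lt_degIn_of_not_ampleFor hF ih hx)⟩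

theorem subset_U2_of_not_ampleFor (hFV : F ⊆ G.VSet) (hF : ¬ G.AmpleFor η F) (i : ℕ) :
    F ⊆ G.U2 η Q i := by
  induction i with
  | zero => exact G.subset_U1_of_not_ampleFor Q hFV hF _
  | succ i ih =>
    exact fun x hx => Finset.mem_filter.mpr ⟨ih hx, G.lt_degIn_of_not_ampleFor hF ih hx⟩

end Burning

end Sandpile.Graph

theorem statement_15_general {α : Type*} [Fintype α] [DecidableEq α] (G : Sandpile.Graph α)
    (Q : Finset α) (η : α → ℕ) :
    (∃ N : ℕ, ∀ i ≥ N, G.U2 η Q i = ∅) ↔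
      (∀ F ⊆ G.VSet, F.Nonempty → G.AmpleFor η F) := by
  constructor
  · rintro ⟨N, hN⟩ F hFV hne
    by_contra hF
    have hsurvives : F ⊆ G.U2 η Q N := G.subset_U2_of_not_ampleFor Q hFV hF N
    exact hne.ne_empty (Finset.subset_empty.mp (hN N le_rfl ▸ hsurvives))
  · intro hample
    obtain ⟨N, hN⟩ := WellFoundedLT.antitone_chain_condition (G.U2_antitone η Q)
    have hstuck : ¬ G.AmpleFor η (G.U2 η Q N) :=
      (G.U2_succ_eq_self_iff η Q).mp (hN (N + 1) N.le_succ).symm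
    have hempty : G.U2 η Q N = ∅ :=
      Finset.not_nonempty_iff_eq_empty.mp (mt (hample _ (G.U2_subset_VSet η Q N)) hstuck)
    exact ⟨N, fun i hi => (hN i hi).symm.trans hempty⟩

/-- The two-phase burning based on `Q` eventually burns every vertex
if and only if the stable sandpile `η` is recurrent (ample for every nonempty
`F ⊆ V`). -/
theorem statement_15 {α : Type*} [Fintype α] [DecidableEq α] (G : Sandpile.Graph α)
    (hG : G.IsSandpileGraph) (Q : Finset α) (hQ : Q ⊆ G.VSet)
    (η : α → ℕ) (hη : G.Stable η) :
    (∃ N : ℕ, ∀ i ≥ N, G.U2 η Q i = ∅) ↔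
      (∀ F ⊆ G.VSet, F.Nonempty → G.AmpleFor η F) :=
  statement_15_general G Q η
end
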